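/- Let X be a finite set and let C and T be partitions of X. Then the two one-sided expected mutual informations under the permutation model coincide: the uniform average of I(C′, T) over C′ ∈ perm(C) equals the uniform average of I(C, T′) over T′ ∈ perm(T). -/

import Mathlib

open Finset Real

variable {X : Type*} [Fintype X] [DecidableEq X]

/-- A finite family of finsets of `X` is a partition of `X` if its blocks are
nonempty, pairwise disjoint, and cover `X`. -/
def IsPartition (P : Finset (Finset X)) : Prop :=
  (∀ B ∈ P, B.Nonempty) ∧
  (∀ B ∈ P, ∀ D ∈ P, B ≠ D → Disjoint B D) ∧
  (∀ x : X, ∃ B ∈ P, x ∈ B)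

instance : DecidablePred (IsPartition (X := X)) := fun _ => by
  unfold IsPartition; infer_instance

/-- The shape of a partition: the multiset of its block sizes. -/
def shape (P : Finset (Finset X)) : Multiset ℕ := P.val.map Finset.card

/-- The image `σ·P` of a partition under a permutation `σ` of `X`. -/
def pmap (σ : X ≃ X) (P : Finset (Finset X)) : Finset (Finset X) :=
  P.image (fun B => B.image σ)

/-- Entropy of a partition: `H(C) = -∑_{B ∈ C} (|B|/N) log (|B|/N)`. -/
noncomputable def entropy (C : Finset (Finset X)) : ℝ :=
  -∑ B ∈ C, ((B.card : ℝ) / (Fintype.card X : ℝ)) *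
    Real.log ((B.card : ℝ) / (Fintype.card X : ℝ))

/-- Mutual information of two partitions:
`I(C,T) = ∑_{B ∈ C} ∑_{D ∈ T} (|B∩D|/N) log (N |B∩D| / (|B| |D|))`
(summands with `B ∩ D = ∅` vanish since the first factor is `0`). -/
noncomputable def MI (C T : Finset (Finset X)) : ℝ :=
  ∑ B ∈ C, ∑ D ∈ T, (((B ∩ D).card : ℝ) / (Fintype.card X : ℝ)) *
    Real.log ((Fintype.card X : ℝ) * ((B ∩ D).card : ℝ) / ((B.card : ℝ) * (D.card : ℝ)))

/-- The permutation random model `perm(C)`: all partitions of `X` with the same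
shape as `C`. -/
def permModel (C : Finset (Finset X)) : Finset (Finset (Finset X)) :=
  Finset.univ.filter (fun P => IsPartition P ∧ shape P = shape C)

/-- The all-partitions random model `all(X)`: all partitions of `X`. -/
def allModel (X : Type*) [Fintype X] [DecidableEq X] : Finset (Finset (Finset X)) :=
  Finset.univ.filter (fun P => IsPartition P)

/-- Uniform average of `f` over a finite set `s`. -/
noncomputable def avg {α : Type*} (s : Finset α) (f : α → ℝ) : ℝ :=
  (∑ a ∈ s, f a) / s.card

/-- Two finsets with the same multiset of values under `f` admit a value-preserving bijection. -/
theorem exists_equiv_of_map_val_eq {α β : Type*} [DecidableEq β] {s t : Finset α} {f : α → β}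
    (h : s.val.map f = t.val.map f) : ∃ e : s ≃ t, ∀ a : s, f (e a) = f a := by
  classical
  have hfib : ∀ c : β, Nonempty ({a : s // f a = c} ≃ {b : t // f b = c}) := by
    intro c
    have key : ∀ u : Finset α, Fintype.card {a : u // f a = c} = (u.val.map f).count c := by
      intro u
      rw [Fintype.card_subtype, Multiset.count_map, ← Finset.filter_val, Finset.card_val,
        ← Finset.card_map (Function.Embedding.subtype _)]
      congr 1
      ext a
      simp [eq_comm, and_comm]
    exact Fintype.card_eq.mp (by rw [key, key, h])
  have e := fun c => (hfib c).some
  exact ⟨Equiv.ofFiberEquiv e, fun a => Equiv.ofFiberEquiv_map e a⟩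

omit [Fintype X] in
/-- Every element of `X` lies in a unique block, which gives the block map of a partition. -/
theorem IsPartition.exists_block {P : Finset (Finset X)} (hP : IsPartition P) :
    ∃ p : X → P, ∀ (x : X) (B : P), p x = B ↔ x ∈ (B : Finset X) := by
  choose p hp hxp using hP.2.2
  refine ⟨fun x => ⟨p x, hp x⟩, fun x B => ⟨?_, fun hx => ?_⟩⟩
  · rintro rfl
    exact hxp x
  · by_contra hne
    exact Finset.disjoint_left.mp
      (hP.2.1 (p x) (hp x) B B.2 fun h => hne (Subtype.ext h)) (hxp x) hx

/-- Partitions of the same shape are conjugate under a permutation. -/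
theorem IsPartition.exists_pmap_eq {P Q : Finset (Finset X)} (hP : IsPartition P)
    (hQ : IsPartition Q) (h : shape P = shape Q) : ∃ σ : X ≃ X, pmap σ P = Q := by
  obtain ⟨e, he⟩ := exists_equiv_of_map_val_eq h
  obtain ⟨p, hp⟩ := hP.exists_block
  obtain ⟨q, hq⟩ := hQ.exists_block
  have hfib : ∀ D : Q, Nonempty ({x // e (p x) = D} ≃ {x // q x = D}) := by
    intro D
    refine Fintype.card_eq.mp ?_
    have h₁ : Fintype.card {x // e (p x) = D} = (e.symm D : Finset X).card := by
      rw [← Fintype.card_coe]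
      refine Fintype.card_congr (Equiv.subtypeEquivRight fun x => ?_)
      rw [← hp, Equiv.eq_symm_apply]
    have h₂ : Fintype.card {x // q x = D} = (D : Finset X).card := by
      rw [← Fintype.card_coe]
      exact Fintype.card_congr (Equiv.subtypeEquivRight fun x => hq x D)
    rw [h₁, h₂, ← he, Equiv.apply_symm_apply]
  have g := fun D => (hfib D).some
  set σ : X ≃ X := Equiv.ofFiberEquiv g
  have hσ : ∀ x, q (σ x) = e (p x) := fun x => Equiv.ofFiberEquiv_map g x
  have himage : ∀ B : P, (B : Finset X).image σ = e B := by
    intro B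
    ext y
    obtain ⟨x, rfl⟩ := σ.surjective y
    rw [σ.injective.mem_finset_image, ← hq, hσ, e.injective.eq_iff, hp]
  refine ⟨σ, ?_⟩
  ext D
  simp only [pmap, Finset.mem_image]
  constructor
  · rintro ⟨B, hB, rfl⟩
    rw [himage ⟨B, hB⟩]
    exact (e _).2
  · intro hD
    exact ⟨e.symm ⟨D, hD⟩, (e.symm _).2, by rw [himage, Equiv.apply_symm_apply]⟩

omit [Fintype X] in
theorem shape_pmap (σ : X ≃ X) (P : Finset (Finset X)) : shape (pmap σ P) = shape P := by
  rw [shape, pmap, Finset.image_val_of_injOn (Finset.image_injective σ.injective).injOn,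
    Multiset.map_map]
  exact Multiset.map_congr rfl fun B _ => Finset.card_image_of_injective B σ.injective

omit [Fintype X] in
theorem IsPartition.pmap {P : Finset (Finset X)} (hP : IsPartition P) (σ : X ≃ X) :
    IsPartition (pmap σ P) := by
  refine ⟨?_, ?_, fun x => ?_⟩
  · simp only [_root_.pmap, Finset.forall_mem_image]
    exact fun B hB => (hP.1 B hB).image σ
  · simp only [_root_.pmap, Finset.forall_mem_image]
    intro B hB D hD hne
    exact (Finset.disjoint_image σ.injective).mpr
      (hP.2.1 B hB D hD fun h => hne (h ▸ rfl))
  · obtain ⟨B, hB, hx⟩ := hP.2.2 (σ.symm x)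
    exact ⟨B.image σ, Finset.mem_image_of_mem _ hB,
      Finset.mem_image.mpr ⟨_, hx, σ.apply_symm_apply x⟩⟩

omit [Fintype X] in
theorem pmap_injective (σ : X ≃ X) :
    Function.Injective (pmap σ : Finset (Finset X) → Finset (Finset X)) :=
  Finset.image_injective (Finset.image_injective σ.injective)

theorem MI_pmap_pmap (σ : X ≃ X) (C T : Finset (Finset X)) :
    MI (pmap σ C) (pmap σ T) = MI C T := by
  have hinj := Finset.image_injective σ.injective
  unfold MI pmap
  rw [Finset.sum_image hinj.injOn]
  refine Finset.sum_congr rfl fun B _ => ?_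
  rw [Finset.sum_image hinj.injOn]
  refine Finset.sum_congr rfl fun D _ => ?_
  rw [← Finset.image_inter _ _ σ.injective]
  simp only [Finset.card_image_of_injective _ σ.injective]

theorem MI_comm (C T : Finset (Finset X)) : MI C T = MI T C := by
  unfold MI
  rw [Finset.sum_comm]
  refine Finset.sum_congr rfl fun D _ => Finset.sum_congr rfl fun B _ => ?_
  rw [Finset.inter_comm, mul_comm (B.card : ℝ)]

theorem mem_permModel {C P : Finset (Finset X)} :
    P ∈ permModel C ↔ IsPartition P ∧ shape P = shape C := by
  simp [permModel]

theorem pmap_mem_permModel {C P : Finset (Finset X)} (σ : X ≃ X) (hP : P ∈ permModel C) :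
    pmap σ P ∈ permModel C := by
  rw [mem_permModel] at hP ⊢
  exact ⟨hP.1.pmap σ, (shape_pmap σ P).trans hP.2⟩

theorem image_pmap_permModel (σ : X ≃ X) (C : Finset (Finset X)) :
    (permModel C).image (pmap σ) = permModel C :=
  Finset.eq_of_subset_of_card_le
    (Finset.image_subset_iff.mpr fun _ hP => pmap_mem_permModel σ hP)
    (Finset.card_image_of_injective _ (pmap_injective σ)).ge

/-- The sum of the mutual information over the permutation model of `C` depends on the
other partition only through its shape. -/
theorem sum_permModel_MI_eq (C : Finset (Finset X)) {T Tp : Finset (Finset X)}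
    (hT : IsPartition T) (hTp : Tp ∈ permModel T) :
    ∑ Cp ∈ permModel C, MI Cp Tp = ∑ Cp ∈ permModel C, MI Cp T := by
  obtain ⟨hTp, hshape⟩ := mem_permModel.mp hTp
  obtain ⟨σ, rfl⟩ := hT.exists_pmap_eq hTp hshape.symm
  rw [← image_pmap_permModel σ C, Finset.sum_image (pmap_injective σ).injOn,
    image_pmap_permModel σ C]
  exact Finset.sum_congr rfl fun Cp _ => MI_pmap_pmap σ Cp T

theorem sum_sum_permModel_MI (C : Finset (Finset X)) {T : Finset (Finset X)}
    (hT : IsPartition T) :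
    ∑ Tp ∈ permModel T, ∑ Cp ∈ permModel C, MI Cp Tp =
      (permModel T).card * ∑ Cp ∈ permModel C, MI Cp T := by
  rw [Finset.sum_congr rfl fun Tp hTp => sum_permModel_MI_eq C hT hTp, Finset.sum_const,
    nsmul_eq_mul]

theorem IsPartition.card_permModel_ne_zero {C : Finset (Finset X)} (hC : IsPartition C) :
    ((permModel C).card : ℝ) ≠ 0 :=
  Nat.cast_ne_zero.mpr (Finset.card_ne_zero_of_mem (mem_permModel.mpr ⟨hC, rfl⟩))

theorem stmt5 (hN : 1 ≤ Fintype.card X)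
    (C T : Finset (Finset X)) (hC : IsPartition C) (hT : IsPartition T) :
    avg (permModel C) (fun Cp => MI Cp T) = avg (permModel T) (fun Tp => MI C Tp) := by
  have hsum : ((permModel T).card : ℝ) * ∑ Cp ∈ permModel C, MI Cp T =
      (permModel C).card * ∑ Tp ∈ permModel T, MI C Tp := by
    rw [← sum_sum_permModel_MI C hT, Finset.sum_comm]
    simp only [MI_comm C]
    rw [← sum_sum_permModel_MI T hC]
    exact Finset.sum_congr rfl fun _ _ => Finset.sum_congr rfl fun _ _ => MI_comm _ _
  rw [avg, avg, div_eq_div_iff hC.card_permModel_ne_zero hT.card_permModel_ne_zero,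
    mul_comm, hsum, mul_comm]
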